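/- Let g(k) count words of length k over the alphabet {0,1,n} (where n ≥ 3 is fixed) in which the allowed adjacent pairs (i,j) are exactly (0,0), (0,1), (1,n), (n,0), (n,1). Then g(k) = F_{k+3}, the (k+3)-rd Fibonacci number (with F_1 = F_2 = 1). -/

import Mathlib

/-- The relation ν on the alphabet {0, 1, n}. -/
def nu (n i j : ℕ) : Prop :=
  (i = 0 ∧ j = 0) ∨ (i = 0 ∧ j = 1) ∨ (i = 1 ∧ j = n) ∨ (i = n ∧ j = 0) ∨ (i = n ∧ j = 1)

/-!
Classify admissible words by their first letter. Deleting that letter shows that the number of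
words starting with `a` is the sum of the numbers of one letter shorter words starting with a
successor of `a`. The letters `0` and `n` have the successors `0` and `1`, and `1` has the only
successor `n`, so the counts for `0`, `1`, `n` are `F_{k+1}`, `F_k`, `F_{k+1}` in length `k`;
their sum is `F_{k+3}`.
-/

open Finset

section AdmissibleWords

variable {α : Type*} (A : Finset α) (r : α → α → Prop) [DecidableRel r]

/-- The admissible words of length `k + 1` over the alphabet `A`: consecutive letters are related
by `r`. The length is shifted so that every word has a first letter. -/
def admissibleWords (k : ℕ) : Finset (Fin (k + 1) → α) :=
  {w ∈ Fintype.piFinset fun _ ↦ A | ∀ i : Fin k, r (w i.castSucc) (w i.succ)}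

variable {A r} {k : ℕ} {a : α}

lemma mem_admissibleWords {w : Fin (k + 1) → α} :
    w ∈ admissibleWords A r k ↔ (∀ i, w i ∈ A) ∧ ∀ i : Fin k, r (w i.castSucc) (w i.succ) := by
  simp only [admissibleWords, mem_filter, Fintype.mem_piFinset]

lemma cons_mem_admissibleWords {w : Fin (k + 1) → α} :
    (Fin.cons a w : Fin (k + 2) → α) ∈ admissibleWords A r (k + 1) ↔
      a ∈ A ∧ r a (w 0) ∧ w ∈ admissibleWords A r k := by
  simp only [mem_admissibleWords, Fin.forall_fin_succ (n := k + 1),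
    Fin.forall_fin_succ (P := fun _ : Fin (k + 1) ↦ r _ _), Fin.castSucc_zero, Fin.cons_zero,
    Fin.cons_succ, ← Fin.succ_castSucc]
  tauto

variable [DecidableEq α]

variable (A r) in
/-- The admissible words of length `k + 1` with first letter `a`, the classes into which the
transfer recursion splits `admissibleWords A r k`. -/
def admissibleWordsFrom (k : ℕ) (a : α) : Finset (Fin (k + 1) → α) :=
  {w ∈ admissibleWords A r k | w 0 = a}

lemma card_filter_admissibleWords (p : α → Prop) [DecidablePred p] :
    #{w ∈ admissibleWords A r k | p (w 0)} = ∑ a ∈ A with p a, #(admissibleWordsFrom A r k a) := by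
  have head_mem : ∀ w ∈ ({w ∈ admissibleWords A r k | p (w 0)} : Finset _),
      w 0 ∈ ({a ∈ A | p a} : Finset α) := fun w hw ↦ by
    rw [mem_filter] at hw ⊢
    exact ⟨(mem_admissibleWords.1 hw.1).1 0, hw.2⟩
  rw [card_eq_sum_card_fiberwise head_mem]
  refine sum_congr rfl fun a ha ↦ ?_
  rw [admissibleWordsFrom, filter_filter]
  congr! 2 with w
  exact and_iff_right_of_imp fun h ↦ h ▸ (mem_filter.1 ha).2

lemma card_admissibleWords :
    #(admissibleWords A r k) = ∑ a ∈ A, #(admissibleWordsFrom A r k a) := by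
  simpa only [filter_true] using card_filter_admissibleWords (A := A) (r := r) fun _ ↦ True

lemma card_admissibleWordsFrom_zero (ha : a ∈ A) : #(admissibleWordsFrom A r 0 a) = 1 := by
  refine card_eq_one.2 ⟨fun _ ↦ a, ?_⟩
  ext w
  simp only [admissibleWordsFrom, mem_filter, mem_admissibleWords, mem_singleton, funext_iff,
    Nat.reduceAdd, Fin.forall_fin_one, IsEmpty.forall_iff, and_true]
  exact and_iff_right_of_imp fun h ↦ h ▸ ha

lemma admissibleWordsFrom_succ (ha : a ∈ A) :
    admissibleWordsFrom A r (k + 1) a =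
      {w ∈ admissibleWords A r k | r a (w 0)}.image (Fin.cons a : _ → Fin (k + 2) → α) := by
  ext w
  induction w using Fin.consCases with
  | cons b w =>
    simp only [admissibleWordsFrom, mem_filter, mem_image, cons_mem_admissibleWords,
      Fin.cons_zero, Fin.cons_inj]
    constructor
    · rintro ⟨⟨-, hr, hw⟩, rfl⟩
      exact ⟨w, ⟨hw, hr⟩, rfl, rfl⟩
    · rintro ⟨_, ⟨hw, hr⟩, rfl, rfl⟩
      exact ⟨⟨ha, hr, hw⟩, rfl⟩

lemma card_admissibleWordsFrom_succ (ha : a ∈ A) :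
    #(admissibleWordsFrom A r (k + 1) a) =
      ∑ b ∈ A with r a b, #(admissibleWordsFrom A r k b) := by
  rw [admissibleWordsFrom_succ ha,
    card_image_of_injective _ (Fin.cons_right_injective (α := fun _ ↦ α) a),
    card_filter_admissibleWords]

end AdmissibleWords

section Nu

variable {n : ℕ}

instance : DecidableRel (nu n) := fun _ _ ↦ inferInstanceAs (Decidable (_ ∨ _))

lemma filter_nu_zero : ({j ∈ {0, 1, n} | nu n 0 j} : Finset ℕ) = {0, 1} := by
  ext j
  grind [nu]

lemma filter_nu_one (hn : n ≠ 1) : ({j ∈ {0, 1, n} | nu n 1 j} : Finset ℕ) = {n} := by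
  ext j
  grind [nu]

lemma filter_nu_self (hn : n ≠ 1) : ({j ∈ {0, 1, n} | nu n n j} : Finset ℕ) = {0, 1} := by
  ext j
  grind [nu]

lemma card_admissibleWordsFrom_nu (hn : n ≠ 1) (k : ℕ) :
    #(admissibleWordsFrom {0, 1, n} (nu n) k 0) = Nat.fib (k + 2) ∧
    #(admissibleWordsFrom {0, 1, n} (nu n) k 1) = Nat.fib (k + 1) ∧
    #(admissibleWordsFrom {0, 1, n} (nu n) k n) = Nat.fib (k + 2) := by
  induction k with
  | zero => simp [card_admissibleWordsFrom_zero]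
  | succ k ih =>
    obtain ⟨card_zero, card_one, card_n⟩ := ih
    have fib_step : Nat.fib (k + 2) + Nat.fib (k + 1) = Nat.fib (k + 1 + 2) := by
      rw [Nat.fib_add_two (n := k + 1), add_comm]
    refine ⟨?_, ?_, ?_⟩
    · rw [card_admissibleWordsFrom_succ (by simp), filter_nu_zero, sum_pair zero_ne_one,
        card_zero, card_one, fib_step]
    · rw [card_admissibleWordsFrom_succ (by simp), filter_nu_one hn, sum_singleton, card_n]
    · rw [card_admissibleWordsFrom_succ (by simp), filter_nu_self hn, sum_pair zero_ne_one,
        card_zero, card_one, fib_step]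

lemma card_admissibleWords_nu (hn : 1 < n) (k : ℕ) :
    #(admissibleWords {0, 1, n} (nu n) k) = Nat.fib (k + 4) := by
  obtain ⟨card_zero, card_one, card_n⟩ := card_admissibleWordsFrom_nu hn.ne' k
  have zero_notMem : 0 ∉ ({1, n} : Finset ℕ) := by grind
  calc #(admissibleWords {0, 1, n} (nu n) k)
      = Nat.fib (k + 2) + (Nat.fib (k + 1) + Nat.fib (k + 2)) := by
        rw [card_admissibleWords, sum_insert zero_notMem, sum_pair hn.ne, card_zero, card_one,
          card_n]
    _ = Nat.fib (k + 4) := by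
        rw [Nat.fib_add_two (n := k + 2), Nat.fib_add_two (n := k + 1)]

end Nu

/-- The number of words of length `k` over the alphabet {0, 1, n} (n ≥ 3) whose
adjacent pairs all satisfy ν equals the Fibonacci number `F_{k+3}`. -/
theorem stmt1 (n : ℕ) (hn : 3 ≤ n) (k : ℕ) (hk : 1 ≤ k) :
    Nat.card {w : Fin k → ℕ //
      (∀ i, w i = 0 ∨ w i = 1 ∨ w i = n) ∧
      ∀ i : Fin k, ∀ h : (i : ℕ) + 1 < k, nu n (w i) (w ⟨(i : ℕ) + 1, h⟩)} =
    Nat.fib (k + 3) := by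
  obtain ⟨k, rfl⟩ := Nat.exists_eq_add_of_le' hk
  rw [Nat.subtype_card (admissibleWords {0, 1, n} (nu n) k) fun w ↦ ?_,
    card_admissibleWords_nu (by omega)]
  rw [mem_admissibleWords]
  simp only [mem_insert, mem_singleton]
  refine and_congr_right fun _ ↦ ⟨fun h i hi ↦ ?_, fun h i ↦ ?_⟩
  · exact h ⟨i, Nat.lt_of_succ_lt_succ hi⟩
  · exact h i.castSucc (Nat.succ_lt_succ i.isLt)
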